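/- Let S = {f_1,…,f_m} be a C¹ weakly conformal IFS with attractor K and fix s ≥ 0. Define g_n = log Σ_{i∈Λ^n} |f_i(K)|^s. Then for every ε > 0 there exists a constant M_ε > 0 such that g_{n+m} ≤ M_ε + mε + g_n + g_m for all n, m ≥ 1. -/

import Mathlib

/-!
The sums are compared term by term, through the estimate
`|f_{uv}(K)| ≤ C e^{ε|u|} |f_u(K)| |f_v(K)|` for all words `u`, `v`. It says that
`f_u` has subexponential distortion on `K`: the difference quotients of `f_u` over any two pairs
of points of `K` are within a factor `C e^{ε|u|}` of each other (`IsAttractor.distLE`).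

To bound the distortion, fix `q` so large that weak conformality makes the derivative of every
`f_w` with `|w| = q` a similarity up to a factor `e^{qε}` at each point of `K`
(`IsAttractor.exists_block`). As `f_w` is `C¹` and `K` is compact, on sets of diameter below some
`δ` the distortion of `f_w` is then at most `e^{2qε}` (`IsAttractor.local_dist`), the factor lost
in linearising being absorbed because `q` is large. A long word is cut into blocks of length `q`;
distortion constants multiply, and the block standing in front of `v` only sees `f_v(K)`, whose
diameter is below `δ` once `|v|` exceeds a fixed `N` (`IsAttractor.shrink`). The remaining letters,
boundedly many, each contribute a bounded factor since `f_i` is bi-Lipschitz on `K`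
(`IsAttractor.bilip`).

Since `X` need not be convex, the maps `f_i` need not be contractions of `K`; that cylinder sets
shrink follows from the convergence in the definition of the coding map, combined with the fact
that the `f_i` are nonexpanding at small scales.
-/

open Filter Metric Set MeasureTheory Topology ENNReal NNReal

noncomputable section

/-- ℝ^d with the sup norm. -/
abbrev Euc (d : ℕ) : Type := Fin d → ℝ

/-- A `C¹` iterated function system on `ℝ^d`: `m` maps, each sending a compact set `X`
into itself, each a `C¹` diffeomorphism on an open set `U ⊇ X`, with
`sup_{x ∈ X} ‖f_i'(x)‖ < 1`. -/
structure C1IFS (d m : ℕ) where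
  f : Fin m → Euc d → Euc d
  f' : Fin m → Euc d → (Euc d →L[ℝ] Euc d)
  X : Set (Euc d)
  U : Set (Euc d)
  compactX : IsCompact X
  nonemptyX : X.Nonempty
  openU : IsOpen U
  subXU : X ⊆ U
  mapsX : ∀ i, Set.MapsTo (f i) X X
  hasDeriv : ∀ i, ∀ x ∈ U, HasFDerivAt (f i) (f' i x) x
  derivCont : ∀ i, ContinuousOn (f' i) U
  injOnU : ∀ i, Set.InjOn (f i) U
  derivBij : ∀ i, ∀ x ∈ U, Function.Bijective (f' i x)
  contract : ∀ i, ∃ c : ℝ, c < 1 ∧ ∀ x ∈ X, ‖f' i x‖ ≤ c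

namespace C1IFS

variable {d m : ℕ}

/-- For a word `w = [i₁, …, i_k]`, the composition `f_{i₁} ∘ ⋯ ∘ f_{i_k}`. -/
def wmap (S : C1IFS d m) : List (Fin m) → Euc d → Euc d
  | [] => id
  | i :: w => S.f i ∘ S.wmap w

/-- Derivative of `wmap w` at `x` (chain rule). -/
def wderiv (S : C1IFS d m) : List (Fin m) → Euc d → (Euc d →L[ℝ] Euc d)
  | [], _ => ContinuousLinearMap.id ℝ (Euc d)
  | i :: w, x => (S.f' i (S.wmap w x)).comp (S.wderiv w x)

end C1IFS

/-- `K` is the attractor of `S`: nonempty compact with `K = ⋃ i, f_i(K)`. -/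
def IsAttractor {d m : ℕ} (S : C1IFS d m) (K : Set (Euc d)) : Prop :=
  IsCompact K ∧ K.Nonempty ∧ K ⊆ S.X ∧ K = ⋃ i, S.f i '' K

/-- The word made of the first `k` letters of the sequence `x`. -/
def wpre {m : ℕ} (x : ℕ → Fin m) (k : ℕ) : List (Fin m) :=
  List.ofFn fun j : Fin k => x j

/-- The shift `σ^k`. -/
def shiftSeq {m : ℕ} (x : ℕ → Fin m) (k : ℕ) : ℕ → Fin m := fun n => x (n + k)

/-- `m(A) = inf_{‖v‖ = 1} ‖A v‖`. -/
def opMinNorm {d : ℕ} (A : Euc d →L[ℝ] Euc d) : ℝ :=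
  sInf {r : ℝ | ∃ v : Euc d, ‖v‖ = 1 ∧ r = ‖A v‖}

/-- `S` is weakly conformal, with coding map `proj`:
`proj x = lim_k f_{x₁} ∘ ⋯ ∘ f_{x_k} (z)` for every `z ∈ K`, and
`sup_x (1/k) (log ‖f'_{(x₁…x_k)}(proj (σ^k x))‖ - log m(f'_{(x₁…x_k)}(proj (σ^k x)))) → 0`. -/
def WeaklyConformalWith {d m : ℕ} (S : C1IFS d m) (K : Set (Euc d))
    (proj : (ℕ → Fin m) → Euc d) : Prop :=
  (∀ x, proj x ∈ K) ∧
  (∀ x, ∀ z ∈ K, Tendsto (fun k => S.wmap (wpre x k) z) atTop (𝓝 (proj x))) ∧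
  Tendsto
    (fun k : ℕ =>
      ⨆ x : ℕ → Fin m,
        (Real.log ‖S.wderiv (wpre x k) (proj (shiftSeq x k))‖ -
            Real.log (opMinNorm (S.wderiv (wpre x k) (proj (shiftSeq x k))))) / k)
    atTop (𝓝 0)

/-- `S` is weakly conformal. -/
def IsWeaklyConformal {d m : ℕ} (S : C1IFS d m) (K : Set (Euc d)) : Prop :=
  ∃ proj, WeaklyConformalWith S K proj

/-- `limsup` of sets indexed by finite words: points belonging to `E w` for words `w`
of arbitrarily large length. -/
def limsupWords {m : ℕ} {α : Type*} (E : List (Fin m) → Set α) : Set α :=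
  ⋂ k : ℕ, ⋃ (w : List (Fin m)) (_ : k ≤ w.length), E w

/-- `limsup` of a sequence of sets. -/
def limsupSets {α : Type*} (A : ℕ → Set α) : Set α :=
  ⋂ k : ℕ, ⋃ (n : ℕ) (_ : k ≤ n), A n

/-- The pressure of `S` at `s` is `P`:
`(1/k) log Σ_{w ∈ Λ^k} |f_w(K)|^s → P`. -/
def HasPressure {d m : ℕ} (S : C1IFS d m) (K : Set (Euc d)) (s P : ℝ) : Prop :=
  Tendsto
    (fun k : ℕ =>
      Real.log (∑ w : Fin k → Fin m, diam (S.wmap (List.ofFn w) '' K) ^ s) / k)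
    atTop (𝓝 P)

/-- `s`-dimensional Hausdorff content (coverings by closed balls, no scale restriction). -/
def hContent {d : ℕ} (s : ℝ) (E : Set (Euc d)) : ℝ≥0∞ :=
  ⨅ (t : ℕ → Set (Euc d)) (_ : E ⊆ ⋃ n, t n)
    (_ : ∀ n, ∃ x r, t n = closedBall x r),
    ∑' n, ENNReal.ofReal (diam (t n)) ^ s

/-- The `μ`-essential `s`-dimensional Hausdorff content of `A`. -/
def essContent {d : ℕ} (μ : Measure (Euc d)) (s : ℝ) (A : Set (Euc d)) : ℝ≥0∞ :=
  ⨅ (E : Set (Euc d)) (_ : E ⊆ A) (_ : MeasurableSet E) (_ : μ E = μ A),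
    hContent s E

/-- `μ` is the weakly conformal measure for `S` and the positive probability vector `p`. -/
def IsWeaklyConformalMeasure {d m : ℕ} (S : C1IFS d m) (p : Fin m → ℝ)
    (μ : Measure (Euc d)) : Prop :=
  (∀ i, 0 < p i) ∧ (∑ i, p i = 1) ∧ IsProbabilityMeasure μ ∧
    μ = ∑ i, ENNReal.ofReal (p i) • μ.map (S.f i)

/-- `μ` is exact dimensional with dimension `α`. -/
def ExactDim {d : ℕ} (μ : Measure (Euc d)) (α : ℝ) : Prop :=
  ∀ᵐ x ∂μ, Tendsto (fun r : ℝ => Real.log (μ (closedBall x r)).toReal / Real.log r)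
    (𝓝[>] 0) (𝓝 α)

/-- The sequence of balls `B` is `μ`-asymptotically covering. -/
def MuAC {d : ℕ} (μ : Measure (Euc d)) (B : ℕ → Set (Euc d)) : Prop :=
  ∃ C : ℝ≥0∞, 0 < C ∧ ∀ Ω : Set (Euc d), IsOpen Ω → ∀ g : ℕ,
    ∃ F : Finset ℕ, (∀ n ∈ F, g ≤ n) ∧ (∀ n ∈ F, B n ⊆ Ω) ∧
      ((F : Set ℕ).Pairwise fun a b => Disjoint (B a) (B b)) ∧
      C * μ Ω ≤ μ (⋃ n ∈ F, B n)

/-- A gauge function: vanishing at `0`, nonnegative, increasing near `0`. -/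
def IsGauge (ζ : ℝ → ℝ) : Prop :=
  (∀ t, 0 ≤ ζ t) ∧ ζ 0 = 0 ∧ ∃ η > 0, StrictMonoOn ζ (Icc 0 η)

/-- Hausdorff pre-measure at scale `t` associated with a gauge `ζ`. -/
def gaugeContentAt {d : ℕ} (ζ : ℝ → ℝ) (t : ℝ) (E : Set (Euc d)) : ℝ≥0∞ :=
  ⨅ (c : ℕ → Set (Euc d)) (_ : E ⊆ ⋃ n, c n)
    (_ : ∀ n, (∃ x r, c n = closedBall x r) ∧ diam (c n) ≤ t),
    ∑' n, ENNReal.ofReal (ζ (diam (c n)))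

/-- The Hausdorff measure associated with the gauge `ζ`. -/
def gaugeMeasure {d : ℕ} (ζ : ℝ → ℝ) (E : Set (Euc d)) : ℝ≥0∞ :=
  ⨆ (t : ℝ) (_ : 0 < t), gaugeContentAt ζ t E

/-- The cylinder of sequences beginning with the word `w`. -/
def cylinder {m : ℕ} (w : List (Fin m)) : Set (ℕ → Fin m) :=
  {x | wpre x w.length = w}

/-- The generation-`k` cut `Λ^{(k)}`. -/
def lamCut {d m : ℕ} (S : C1IFS d m) (K : Set (Euc d)) (k : ℕ) : Set (List (Fin m)) :=
  {w | w ≠ [] ∧ diam (S.wmap w '' K) ≤ ((2 : ℝ) ^ k)⁻¹ ∧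
    ((2 : ℝ) ^ k)⁻¹ < diam (S.wmap w.dropLast '' K)}

/-- The asymptotically weak separation condition:
`t_k = max_x #{f_w : w ∈ Λ^{(k)}, f_w(K) ∩ B(x, 2^{-k}) ≠ ∅}` satisfies `(log t_k)/k → 0`. -/
def AWSC {d m : ℕ} (S : C1IFS d m) (K : Set (Euc d)) : Prop :=
  ∃ t : ℕ → ℕ,
    (∀ k : ℕ, ∀ x : Euc d,
      Set.ncard {g : Euc d → Euc d | ∃ w ∈ lamCut S K k, S.wmap w = g ∧
        (S.wmap w '' K ∩ closedBall x (((2 : ℝ) ^ k)⁻¹)).Nonempty} ≤ t k) ∧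
    Tendsto (fun k : ℕ => Real.log (t k) / k) atTop (𝓝 0)

/-- `S` has no exact overlaps. -/
def NoExactOverlaps {d m : ℕ} (S : C1IFS d m) : Prop :=
  ∀ w w' : List (Fin m), w.length = w'.length → w ≠ w' → S.wmap w ≠ S.wmap w'

/-- A self-similar IFS on `ℝ^d` with contraction ratios `c i ∈ (0,1)`. -/
structure SelfSimIFS (d m : ℕ) where
  f : Fin m → Euc d → Euc d
  c : Fin m → ℝ
  c_pos : ∀ i, 0 < c i
  c_lt_one : ∀ i, c i < 1
  sim : ∀ i x y, dist (f i x) (f i y) = c i * dist x y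

namespace SelfSimIFS

variable {d m : ℕ}

/-- For a word `w = [i₁, …, i_k]`, the composition `f_{i₁} ∘ ⋯ ∘ f_{i_k}`. -/
def wmap (S : SelfSimIFS d m) : List (Fin m) → Euc d → Euc d
  | [] => id
  | i :: w => S.f i ∘ S.wmap w

/-- `K` is the attractor of the self-similar IFS `S`. -/
def IsAttractor (S : SelfSimIFS d m) (K : Set (Euc d)) : Prop :=
  IsCompact K ∧ K.Nonempty ∧ K = ⋃ i, S.f i '' K

end SelfSimIFS

/-! ### Words and iterated maps -/

/-- `S.DistLE c u A`: the difference quotients of `f_u` over pairs of points of `A` differ by a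
factor of at most `c`, i.e. `|f_u x - f_u y| / |x - y| ≤ c |f_u x' - f_u y'| / |x' - y'|`, written
without division so that degenerate pairs need no separate treatment. -/
def C1IFS.DistLE {d m : ℕ} (S : C1IFS d m) (c : ℝ) (u : List (Fin m)) (A : Set (Euc d)) : Prop :=
  ∀ x ∈ A, ∀ y ∈ A, ∀ x' ∈ A, ∀ y' ∈ A,
    dist (S.wmap u x) (S.wmap u y) * dist x' y' ≤
      c * (dist (S.wmap u x') (S.wmap u y') * dist x y)

section Words

variable {d m : ℕ} {S : C1IFS d m} {K : Set (Euc d)}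

lemma wmap_append (u v : List (Fin m)) : S.wmap (u ++ v) = S.wmap u ∘ S.wmap v := by
  induction u with
  | nil => rfl
  | cons i u ih => simp only [List.cons_append, C1IFS.wmap, ih]; rfl

lemma IsAttractor.mapsTo_f (hK : IsAttractor S K) (i : Fin m) : MapsTo (S.f i) K K := by
  intro z hz
  rw [hK.2.2.2]
  exact mem_iUnion.2 ⟨i, z, hz, rfl⟩

lemma IsAttractor.mapsTo (hK : IsAttractor S K) (u : List (Fin m)) : MapsTo (S.wmap u) K K := by
  induction u with
  | nil => exact fun z hz => hz
  | cons i u ih => exact (hK.mapsTo_f i).comp ih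

lemma IsAttractor.mem_U (hK : IsAttractor S K) {z : Euc d} (hz : z ∈ K) : z ∈ S.U :=
  S.subXU (hK.2.2.1 hz)

lemma IsAttractor.injOn (hK : IsAttractor S K) (u : List (Fin m)) : InjOn (S.wmap u) K := by
  induction u with
  | nil => exact injOn_id K
  | cons i u ih =>
    exact ((S.injOnU i).mono fun z hz => hK.mem_U hz).comp ih (hK.mapsTo u)

lemma IsAttractor.strict_f (hK : IsAttractor S K) (i : Fin m) {z : Euc d} (hz : z ∈ K) :
    HasStrictFDerivAt (S.f i) (S.f' i z) z := by
  have hU : S.U ∈ 𝓝 z := S.openU.mem_nhds (hK.mem_U hz)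
  refine hasStrictFDerivAt_of_hasFDerivAt_of_continuousAt ?_ ((S.derivCont i).continuousAt hU)
  filter_upwards [hU] with x hx using S.hasDeriv i x hx

lemma IsAttractor.strict (hK : IsAttractor S K) (u : List (Fin m)) {z : Euc d} (hz : z ∈ K) :
    HasStrictFDerivAt (S.wmap u) (S.wderiv u z) z := by
  induction u with
  | nil => exact hasStrictFDerivAt_id z
  | cons i u ih => exact (hK.strict_f i (hK.mapsTo u hz)).comp z ih

lemma IsAttractor.continuousOn (hK : IsAttractor S K) (u : List (Fin m)) :
    ContinuousOn (S.wmap u) K :=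
  fun _ hz => (hK.strict u hz).continuousAt.continuousWithinAt

lemma IsAttractor.wderiv_continuousOn (hK : IsAttractor S K) (u : List (Fin m)) :
    ContinuousOn (S.wderiv u) K := by
  induction u with
  | nil => exact continuousOn_const
  | cons i u ih =>
    refine ContinuousOn.clm_comp ?_ ih
    exact ((S.derivCont i).mono fun z hz => hK.mem_U hz).comp (hK.continuousOn u) (hK.mapsTo u)

lemma IsAttractor.wderiv_injective (hK : IsAttractor S K) (u : List (Fin m)) {z : Euc d}
    (hz : z ∈ K) : Function.Injective (S.wderiv u z) := by
  induction u with
  | nil => exact Function.injective_id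
  | cons i u ih => exact (S.derivBij i _ (hK.mem_U (hK.mapsTo u hz))).1.comp ih

lemma wpre_succ (x : ℕ → Fin m) (k : ℕ) : wpre x (k + 1) = wpre x k ++ [x k] := by
  rw [wpre, List.ofFn_succ', List.concat_eq_append]
  rfl

lemma length_wpre (x : ℕ → Fin m) (k : ℕ) : (wpre x k).length = k := by simp [wpre]

/-- Prefixing a word `w` to a sequence `y` yields a sequence starting with `w` whose
`|w|`-fold shift is `y`. -/
lemma exists_seq_extending (w : List (Fin m)) (y : ℕ → Fin m) :
    ∃ x : ℕ → Fin m, wpre x w.length = w ∧ shiftSeq x w.length = y := by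
  refine ⟨fun n => if h : n < w.length then w[n] else y (n - w.length), ?_, ?_⟩
  · apply List.ext_getElem <;> simp [wpre]
  · funext n
    simp [shiftSeq]

end Words

/-! ### Linear maps and the minimal norm -/

section MinNorm

variable {d : ℕ}

lemma opMinNorm_mul_le (A : Euc d →L[ℝ] Euc d) (v : Euc d) : opMinNorm A * ‖v‖ ≤ ‖A v‖ := by
  rcases eq_or_ne v 0 with rfl | hv
  · simp
  have hv' : 0 < ‖v‖ := norm_pos_iff.2 hv
  have hle : opMinNorm A ≤ ‖A (‖v‖⁻¹ • v)‖ := by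
    refine csInf_le ⟨0, ?_⟩ ⟨_, ?_, rfl⟩
    · rintro r ⟨v, -, rfl⟩
      exact norm_nonneg _
    · rw [norm_smul, norm_inv, norm_norm, inv_mul_cancel₀ hv'.ne']
  rw [map_smul, norm_smul, norm_inv, norm_norm] at hle
  calc opMinNorm A * ‖v‖ ≤ (‖v‖⁻¹ * ‖A v‖) * ‖v‖ := by gcongr
    _ = ‖A v‖ := by field_simp

lemma le_opMinNorm (hd : 1 ≤ d) {A : Euc d →L[ℝ] Euc d} {a : ℝ}
    (h : ∀ v : Euc d, ‖v‖ = 1 → a ≤ ‖A v‖) : a ≤ opMinNorm A := by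
  have : Nonempty (Fin d) := ⟨⟨0, hd⟩⟩
  obtain ⟨v, hv⟩ := exists_norm_eq (Euc d) (zero_le_one (α := ℝ))
  refine le_csInf ⟨_, v, hv, rfl⟩ ?_
  rintro r ⟨v, hv, rfl⟩
  exact h v hv

lemma opMinNorm_le_norm (hd : 1 ≤ d) (A : Euc d →L[ℝ] Euc d) : opMinNorm A ≤ ‖A‖ := by
  have : Nonempty (Fin d) := ⟨⟨0, hd⟩⟩
  obtain ⟨v, hv⟩ := exists_norm_eq (Euc d) (zero_le_one (α := ℝ))
  simpa [hv] using (opMinNorm_mul_le A v).trans (A.le_opNorm v)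

end MinNorm

/-! ### Uniform estimates from compactness -/

section Attractor

variable {d m : ℕ} {S : C1IFS d m} {K : Set (Euc d)}

/-- By compactness of `K` and of the unit sphere, the derivatives of a fixed `f_w` are uniformly
bounded and uniformly bounded below on `K`. -/
lemma IsAttractor.wderiv_bounds (hd : 1 ≤ d) (hK : IsAttractor S K) (w : List (Fin m)) :
    ∃ a > 0, ∃ b : ℝ, ∀ z ∈ K, a ≤ opMinNorm (S.wderiv w z) ∧ ‖S.wderiv w z‖ ≤ b := by
  obtain ⟨b, hb⟩ := hK.1.exists_bound_of_continuousOn (hK.wderiv_continuousOn w)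
  have hcont : ContinuousOn (fun p : Euc d × Euc d => ‖S.wderiv w p.1 p.2‖)
      (K ×ˢ sphere (0 : Euc d) 1) := by
    refine (ContinuousOn.clm_apply ?_ continuousOn_snd).norm
    exact (hK.wderiv_continuousOn w).comp continuousOn_fst fun p hp => hp.1
  have hpos : ∀ p ∈ K ×ˢ sphere (0 : Euc d) 1, 0 < ‖S.wderiv w p.1 p.2‖ := by
    rintro ⟨z, v⟩ ⟨hz, hv⟩
    refine norm_pos_iff.2 fun h0 => ?_
    have : v = 0 := hK.wderiv_injective w hz (by simpa using h0)
    simp [this] at hv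
  obtain ⟨a, ha, h⟩ := (hK.1.prod (isCompact_sphere (0 : Euc d) 1)).exists_forall_le' hcont hpos
  exact ⟨a, ha, b, fun z hz =>
    ⟨le_opMinNorm hd fun v hv => h (z, v) ⟨hz, by simpa using hv⟩, hb z hz⟩⟩

/-- The supremum defining weak conformality is over a bounded family, so it is a genuine
supremum. -/
lemma IsAttractor.bddAbove (hd : 1 ≤ d) (hK : IsAttractor S K) {proj : (ℕ → Fin m) → Euc d}
    (hp : ∀ x, proj x ∈ K) (k : ℕ) :
    BddAbove (range fun x : ℕ → Fin m =>
      (Real.log ‖S.wderiv (wpre x k) (proj (shiftSeq x k))‖ -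
        Real.log (opMinNorm (S.wderiv (wpre x k) (proj (shiftSeq x k))))) / k) := by
  choose a ha b hb using hK.wderiv_bounds hd
  obtain ⟨B, hB⟩ := (finite_range fun w : Fin k → Fin m =>
    (Real.log (b (List.ofFn w)) - Real.log (a (List.ofFn w))) / k).bddAbove
  refine ⟨B, ?_⟩
  rintro _ ⟨x, rfl⟩
  refine le_trans ?_ (hB ⟨fun j : Fin k => x j, rfl⟩)
  obtain ⟨h1, h2⟩ := hb (wpre x k) (proj (shiftSeq x k)) (hp _)
  have h3 := ha (wpre x k)
  have h4 := opMinNorm_le_norm hd (S.wderiv (wpre x k) (proj (shiftSeq x k)))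
  have h5 := Real.log_le_log h3 h1
  have h6 := Real.log_le_log (h3.trans_le (h1.trans h4)) h2
  simp only [wpre] at h5 h6 ⊢
  gcongr

lemma exists_ball_subset_nhds (hK : IsCompact K) {t : Euc d → Set (Euc d)}
    (ht : ∀ z ∈ K, t z ∈ 𝓝 z) : ∃ δ > 0, ∀ x ∈ K, ∃ z ∈ K, ball x δ ⊆ t z := by
  simpa only [ball, UniformSpace.ball, preimage_ofPred_eq, dist_comm, Subtype.exists, exists_prop]
    using uniformity_basis_dist.lebesgue_number_lemma_nhds' hK (U := fun x _ => t x) ht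

/-! ### Cylinder sets shrink uniformly -/

/-- At small scales every `f_u` is nonexpanding on `K`, since `‖f_i'‖ < 1` on `K`. -/
lemma IsAttractor.nonexpanding (hK : IsAttractor S K) :
    ∃ δ > 0, ∀ u : List (Fin m), ∀ x ∈ K, ∀ y ∈ K, dist x y < δ →
      dist (S.wmap u x) (S.wmap u y) ≤ dist x y := by
  have hloc : ∀ z ∈ K, ∃ t ∈ 𝓝 z, ∀ i, ∀ x ∈ t, ∀ y ∈ t,
      dist (S.f i x) (S.f i y) ≤ dist x y := by
    intro z hz
    have : ∀ i, ∃ t ∈ 𝓝 z, ∀ x ∈ t, ∀ y ∈ t, dist (S.f i x) (S.f i y) ≤ dist x y := by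
      intro i
      obtain ⟨c, hc, hcX⟩ := S.contract i
      have hlt : ‖S.f' i z‖₊ < 1 := by
        rw [← NNReal.coe_lt_coe]
        exact (hcX z (hK.2.2.1 hz)).trans_lt hc
      obtain ⟨t, ht, hL⟩ := (hK.strict_f i hz).exists_lipschitzOnWith_of_nnnorm_lt 1 hlt
      exact ⟨t, ht, fun x hx y hy => by simpa using hL.dist_le_mul x hx y hy⟩
    choose t ht h using this
    exact ⟨⋂ i, t i, by simpa using ht, fun i x hx y hy =>
      h i x (mem_iInter.1 hx i) y (mem_iInter.1 hy i)⟩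
  choose! t ht h using hloc
  obtain ⟨δ, hδ, hleb⟩ := exists_ball_subset_nhds hK.1 ht
  refine ⟨δ, hδ, fun u => ?_⟩
  induction u with
  | nil => exact fun x _ y _ _ => le_rfl
  | cons i u ih =>
    intro x hx y hy hxy
    have h1 := ih x hx y hy hxy
    obtain ⟨z, hz, hsub⟩ := hleb _ (hK.mapsTo u hx)
    refine le_trans (h z hz i _ (hsub (mem_ball_self hδ)) _ (hsub ?_)) h1
    rw [mem_ball, dist_comm]
    exact h1.trans_lt hxy

/-- The diameters `|f_u(K)|` tend to `0` as `|u| → ∞`. Pointwise convergence in the definition of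
the coding map is upgraded using equicontinuity of the maps `f_u` and compactness of `K` and of
the sequence space. -/
lemma IsAttractor.shrink (hm : 2 ≤ m) (hK : IsAttractor S K) {proj : (ℕ → Fin m) → Euc d}
    (hp : ∀ x, ∀ z ∈ K, Tendsto (fun k => S.wmap (wpre x k) z) atTop (𝓝 (proj x)))
    {δ : ℝ} (hδ : 0 < δ) :
    ∃ N : ℕ, ∀ u : List (Fin m), N ≤ u.length → ∀ x ∈ K, ∀ y ∈ K,
      dist (S.wmap u x) (S.wmap u y) < δ := by
  obtain ⟨δ₀, hδ₀, hne⟩ := hK.nonexpanding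
  have hx : ∀ x : ℕ → Fin m, ∃ k, ∀ y ∈ K, dist (S.wmap (wpre x k) y) (proj x) < δ / 2 := by
    intro x
    obtain ⟨η, hη, hη1, hη2⟩ : ∃ η > 0, η ≤ δ₀ ∧ η ≤ δ / 4 :=
      ⟨min δ₀ (δ / 4), by positivity, min_le_left _ _, min_le_right _ _⟩
    obtain ⟨T, hTK, hT, hcov⟩ := hK.1.finite_cover_balls hη
    have hev : ∀ᶠ k in atTop, ∀ z ∈ T, dist (S.wmap (wpre x k) z) (proj x) < δ / 4 :=
      (eventually_all_finite hT).2 fun z hz =>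
        (Metric.tendsto_nhds.1 (hp x z (hTK hz))) _ (by positivity)
    obtain ⟨k, hk⟩ := hev.exists
    refine ⟨k, fun y hy => ?_⟩
    obtain ⟨z, hz, hyz⟩ := mem_iUnion₂.1 (hcov hy)
    rw [mem_ball] at hyz
    have h1 := hne (wpre x k) y hy z (hTK hz) (hyz.trans_le hη1)
    have h2 := hk z hz
    have h3 := dist_triangle (S.wmap (wpre x k) y) (S.wmap (wpre x k) z) (proj x)
    linarith
  have hcpt : ∃ N : ℕ, ∀ x ∈ (univ : Set (ℕ → Fin m)), ∀ l, N ≤ l → ∀ y ∈ K, ∀ z ∈ K,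
      dist (S.wmap (wpre x l) y) (S.wmap (wpre x l) z) < δ := by
    refine isCompact_univ.induction_on (p := fun s => ∃ N : ℕ, ∀ x ∈ s, ∀ l, N ≤ l →
      ∀ y ∈ K, ∀ z ∈ K, dist (S.wmap (wpre x l) y) (S.wmap (wpre x l) z) < δ) ?_ ?_ ?_ ?_
    · exact ⟨0, by simp⟩
    · rintro s t hst ⟨N, hN⟩
      exact ⟨N, fun x hx => hN x (hst hx)⟩
    · rintro s t ⟨N, hN⟩ ⟨N', hN'⟩
      refine ⟨max N N', ?_⟩
      rintro x (hx | hx) l hl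
      · exact hN x hx l ((le_max_left _ _).trans hl)
      · exact hN' x hx l ((le_max_right _ _).trans hl)
    · intro x _
      obtain ⟨k, hk⟩ := hx x
      refine ⟨{x' | ∀ j < k, x' j = x j}, mem_nhdsWithin_of_mem_nhds ?_, k, ?_⟩
      · have : ∀ᶠ x' in 𝓝 x, ∀ j ∈ Iio k, x' j = x j := by
          refine (eventually_all_finite (finite_Iio k)).2 fun j _ => ?_
          exact (continuous_apply j).continuousAt (isOpen_discrete {x j} |>.mem_nhds rfl)
        exact this
      -- `f_{x'|l}(K)` is contained in `f_{x|k}(K)`, which is within `δ / 2` of `proj x`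
      · intro x' hx' l hl
        have hin : ∀ y ∈ K, ∃ y' ∈ K, S.wmap (wpre x' l) y = S.wmap (wpre x k) y' := by
          induction l, hl using Nat.le_induction with
          | base =>
            have : wpre x' k = wpre x k := by
              unfold wpre
              congr 1
              funext j
              exact hx' j j.2
            exact fun y hy => ⟨y, hy, by rw [this]⟩
          | succ l hl ih =>
            intro y hy
            rw [wpre_succ, wmap_append]
            exact ih _ (hK.mapsTo [x' l] hy)
        intro y hy z hz
        obtain ⟨y', hy', hy1⟩ := hin y hy
        obtain ⟨z', hz', hz1⟩ := hin z hz
        rw [hy1, hz1]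
        linarith [hk y' hy', hk z' hz',
          dist_triangle_right (S.wmap (wpre x k) y') (S.wmap (wpre x k) z') (proj x)]
  obtain ⟨N, hN⟩ := hcpt
  refine ⟨N, fun u hu => ?_⟩
  obtain ⟨x, hxu, -⟩ := exists_seq_extending u fun _ => ⟨0, by omega⟩
  have := hN x (mem_univ x) u.length hu
  rwa [hxu] at this

/-- Every point of `K` has a code. -/
lemma IsAttractor.proj_surj (hm : 2 ≤ m) (hK : IsAttractor S K) {proj : (ℕ → Fin m) → Euc d}
    (hp : ∀ x, ∀ z ∈ K, Tendsto (fun k => S.wmap (wpre x k) z) atTop (𝓝 (proj x)))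
    {z : Euc d} (hz : z ∈ K) : ∃ x, proj x = z := by
  have hstep : ∀ y : K, ∃ i : Fin m, ∃ y' : K, S.f i y' = y := by
    rintro ⟨y, hy⟩
    have hy' := hy
    rw [hK.2.2.2] at hy'
    obtain ⟨i, y', hy', h⟩ := mem_iUnion.1 hy'
    exact ⟨i, ⟨y', hy'⟩, h⟩
  choose i nx hnx using hstep
  let o : ℕ → K := fun k => nx^[k] ⟨z, hz⟩
  let x : ℕ → Fin m := fun k => i (o k)
  have hcode : ∀ k, S.wmap (wpre x k) (o k) = z := by
    intro k
    induction k with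
    | zero => rfl
    | succ k ih =>
      rw [wpre_succ, wmap_append, ← ih]
      have : o (k + 1) = nx (o k) := Function.iterate_succ_apply' nx k _
      simp only [this, Function.comp_apply, C1IFS.wmap, id, x, hnx]
  refine ⟨x, tendsto_nhds_unique (hp x z hz) ?_⟩
  refine Metric.tendsto_atTop.2 fun δ hδ => ?_
  obtain ⟨N, hN⟩ := hK.shrink hm hp hδ
  refine ⟨N, fun k hk => ?_⟩
  have := hN (wpre x k) (by rwa [length_wpre]) z hz (o k) (o k).2
  rwa [hcode] at this

/-! ### Distortion -/

/-- By weak conformality there is a generation `q` in which all derivatives are similarities up to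
the factor `e^{qe}`. Moreover `q` is chosen with `3 ≤ e^{qe}`, so that a further factor `3`, lost
when `f_w` is compared with its derivative, can be absorbed. -/
lemma IsAttractor.exists_block (hd : 1 ≤ d) (hm : 2 ≤ m) (hK : IsAttractor S K)
    (hwc : IsWeaklyConformal S K) {e : ℝ} (he : 0 < e) :
    ∃ q : ℕ, 1 ≤ q ∧ 3 ≤ Real.exp (q * e) ∧ ∀ w : List (Fin m), w.length = q → ∀ z ∈ K,
      ‖S.wderiv w z‖ ≤ Real.exp (q * e) * opMinNorm (S.wderiv w z) := by
  obtain ⟨proj, hpK, hp, hlim⟩ := hwc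
  have h3 : Tendsto (fun q : ℕ => Real.exp (q * e)) atTop atTop :=
    Real.tendsto_exp_atTop.comp (tendsto_natCast_atTop_atTop.atTop_mul_const he)
  obtain ⟨q, hq, hq3, hq1⟩ := ((hlim.eventually_lt_const he).and
    ((h3.eventually_ge_atTop 3).and (eventually_ge_atTop 1))).exists
  refine ⟨q, hq1, hq3, ?_⟩
  rintro w rfl z hz
  obtain ⟨y, rfl⟩ := hK.proj_surj hm hp hz
  obtain ⟨x, hxw, hxy⟩ := exists_seq_extending w y
  have h := (le_ciSup (hK.bddAbove hd hpK w.length) x).trans hq.le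
  rw [hxw, hxy] at h
  obtain ⟨a, ha, b, hb⟩ := hK.wderiv_bounds hd w
  have hpos : 0 < opMinNorm (S.wderiv w (proj y)) := ha.trans_le (hb _ hz).1
  have hq0 : (0 : ℝ) < w.length := by exact_mod_cast hq1
  rw [div_le_iff₀ hq0] at h
  rw [← Real.log_le_log_iff (hpos.trans_le (opMinNorm_le_norm hd _)) (by positivity),
    Real.log_mul (by positivity) hpos.ne', Real.log_exp]
  linarith

/-- A strictly differentiable map is, near the base point, bi-Lipschitz with constants comparable
to the extreme stretching factors of its derivative. -/
lemma IsAttractor.local_bilip (hd : 1 ≤ d) (hK : IsAttractor S K) (w : List (Fin m))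
    {z : Euc d} (hz : z ∈ K) :
    0 < opMinNorm (S.wderiv w z) ∧ ∀ᶠ p : Euc d × Euc d in 𝓝 (z, z),
      opMinNorm (S.wderiv w z) / 2 * dist p.1 p.2 ≤ dist (S.wmap w p.1) (S.wmap w p.2) ∧
      dist (S.wmap w p.1) (S.wmap w p.2) ≤ 3 / 2 * ‖S.wderiv w z‖ * dist p.1 p.2 := by
  obtain ⟨a, ha, b, hb⟩ := hK.wderiv_bounds hd w
  have hpos : 0 < opMinNorm (S.wderiv w z) := ha.trans_le (hb _ hz).1
  refine ⟨hpos, ?_⟩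
  filter_upwards [(hK.strict w hz).isLittleO.def (half_pos hpos)] with p h
  have h1 := opMinNorm_mul_le (S.wderiv w z) (p.1 - p.2)
  have h2 := (S.wderiv w z).le_opNorm (p.1 - p.2)
  have h3 := mul_le_mul_of_nonneg_right (opMinNorm_le_norm hd (S.wderiv w z))
    (norm_nonneg (p.1 - p.2))
  have h4 := norm_le_norm_add_norm_sub' (S.wmap w p.1 - S.wmap w p.2)
    (S.wderiv w z (p.1 - p.2))
  have h5 := norm_le_norm_add_norm_sub (S.wmap w p.1 - S.wmap w p.2)
    (S.wderiv w z (p.1 - p.2))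
  rw [dist_eq_norm, dist_eq_norm]
  constructor <;> linarith

/-- At small scales the distortion of `f_w`, `w ∈ Λ^q`, is governed by the eccentricity of the
derivative. -/
lemma IsAttractor.local_dist (hd : 1 ≤ d) (hK : IsAttractor S K) {q : ℕ} {e : ℝ}
    (hq3 : 3 ≤ Real.exp (q * e)) (hq : ∀ w : List (Fin m), w.length = q → ∀ z ∈ K,
      ‖S.wderiv w z‖ ≤ Real.exp (q * e) * opMinNorm (S.wderiv w z)) :
    ∃ δ > 0, ∀ w : List (Fin m), w.length = q → ∀ z ∈ K,
      S.DistLE (Real.exp (2 * (q * e))) w (ball z δ) := by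
  have hloc : ∀ z ∈ K, ∃ t ∈ 𝓝 z, ∀ w : List (Fin m), w.length = q →
      S.DistLE (Real.exp (2 * (q * e))) w t := by
    intro z hz
    have : ∀ w : Fin q → Fin m, ∃ t ∈ 𝓝 z,
        S.DistLE (Real.exp (2 * (q * e))) (List.ofFn w) t := by
      intro w
      obtain ⟨hpos, hev⟩ := hK.local_bilip hd (List.ofFn w) hz
      have hqw := hq (List.ofFn w) (by simp) z hz
      rw [nhds_prod_eq] at hev
      obtain ⟨t, ht, h⟩ := eventually_prod_self_iff'.1 hev
      refine ⟨t, ht, fun x hx y hy x' hx' y' hy' => ?_⟩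
      have h1 := (h x hx y hy).2
      have h2 := (h x' hx' y' hy').1
      simp only at h1 h2
      set E := Real.exp (q * e)
      set μ := opMinNorm (S.wderiv (List.ofFn w) z)
      have hE : Real.exp (2 * (q * e)) = E * E := by rw [two_mul, Real.exp_add]
      rw [hE]
      have hE0 : 0 < E := Real.exp_pos _
      calc _ ≤ (3 / 2 * ‖S.wderiv (List.ofFn w) z‖ * dist x y) * dist x' y' := by gcongr
        _ ≤ (3 / 2 * (E * μ) * dist x y) * dist x' y' := by gcongr
        _ = 3 * (E * ((μ / 2 * dist x' y') * dist x y)) := by ring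
        _ ≤ E * (E * ((μ / 2 * dist x' y') * dist x y)) := by gcongr
        _ ≤ E * (E * (dist (S.wmap (List.ofFn w) x') (S.wmap (List.ofFn w) y')
              * dist x y)) := by gcongr
        _ = _ := by ring
    choose t ht h using this
    refine ⟨⋂ w, t w, by simpa using ht, ?_⟩
    rintro w rfl x hx y hy x' hx' y' hy'
    have := h w.get x (mem_iInter.1 hx _) y (mem_iInter.1 hy _) x' (mem_iInter.1 hx' _)
      y' (mem_iInter.1 hy' _)
    rwa [List.ofFn_get] at this
  choose! t ht h using hloc
  obtain ⟨δ, hδ, hleb⟩ := exists_ball_subset_nhds hK.1 ht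
  refine ⟨δ, hδ, fun w hw z hz x hx y hy x' hx' y' hy' => ?_⟩
  obtain ⟨z', hz', hsub⟩ := hleb z hz
  exact h z' hz' w hw x (hsub hx) y (hsub hy) x' (hsub hx') y' (hsub hy')

/-- Each `f_w` is bi-Lipschitz on the whole of `K`: locally by strict differentiability, and away
from the diagonal by injectivity and compactness. -/
lemma IsAttractor.bilip (hd : 1 ≤ d) (hK : IsAttractor S K) (w : List (Fin m)) :
    ∃ D : ℝ, 1 ≤ D ∧ ∀ p ∈ K ×ˢ K, dist p.1 p.2 ≤ D * dist (S.wmap w p.1) (S.wmap w p.2) ∧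
      dist (S.wmap w p.1) (S.wmap w p.2) ≤ D * dist p.1 p.2 := by
  refine (hK.1.prod hK.1).induction_on (p := fun s => ∃ D : ℝ, 1 ≤ D ∧ ∀ p ∈ s,
    dist p.1 p.2 ≤ D * dist (S.wmap w p.1) (S.wmap w p.2) ∧
      dist (S.wmap w p.1) (S.wmap w p.2) ≤ D * dist p.1 p.2) ?_ ?_ ?_ ?_
  · exact ⟨1, le_rfl, by simp⟩
  · rintro s t hst ⟨D, hD, h⟩
    exact ⟨D, hD, fun p hp => h p (hst hp)⟩
  · rintro s t ⟨D, hD, h⟩ ⟨D', hD', h'⟩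
    refine ⟨max D D', hD.trans (le_max_left _ _), ?_⟩
    rintro p (hp | hp)
    · exact ⟨(h p hp).1.trans (by gcongr; exact le_max_left _ _),
        (h p hp).2.trans (by gcongr; exact le_max_left _ _)⟩
    · exact ⟨(h' p hp).1.trans (by gcongr; exact le_max_right _ _),
        (h' p hp).2.trans (by gcongr; exact le_max_right _ _)⟩
  · rintro ⟨x, y⟩ ⟨hx, hy⟩
    simp only at hx hy
    suffices h : ∃ D : ℝ, 1 ≤ D ∧ ∀ᶠ p : Euc d × Euc d in 𝓝[K ×ˢ K] (x, y),
        dist p.1 p.2 ≤ D * dist (S.wmap w p.1) (S.wmap w p.2) ∧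
        dist (S.wmap w p.1) (S.wmap w p.2) ≤ D * dist p.1 p.2 by
      obtain ⟨D, hD, h⟩ := h
      exact ⟨_, h, D, hD, fun p hp => hp⟩
    rcases eq_or_ne x y with rfl | hxy
    · obtain ⟨hpos, hev⟩ := hK.local_bilip hd w hx
      set μ := opMinNorm (S.wderiv w x)
      refine ⟨1 + 2 / μ + 3 / 2 * ‖S.wderiv w x‖, ?_, ?_⟩
      · have : 0 < 2 / μ := by positivity
        have : 0 ≤ 3 / 2 * ‖S.wderiv w x‖ := by positivity
        linarith
      · filter_upwards [mem_nhdsWithin_of_mem_nhds hev] with p hp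
        constructor
        · calc dist p.1 p.2 = 2 / μ * (μ / 2 * dist p.1 p.2) := by field_simp
            _ ≤ 2 / μ * dist (S.wmap w p.1) (S.wmap w p.2) := by gcongr; exact hp.1
            _ ≤ _ := by
              gcongr
              have : 0 ≤ 3 / 2 * ‖S.wderiv w x‖ := by positivity
              linarith
        · refine hp.2.trans ?_
          gcongr
          have : 0 < 2 / μ := by positivity
          linarith
    · have hd1 : 0 < dist x y := dist_pos.2 hxy
      have hd2 : 0 < dist (S.wmap w x) (S.wmap w y) :=
        dist_pos.2 fun h => hxy (hK.injOn w hx hy h)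
      have c1 : ContinuousWithinAt (fun p : Euc d × Euc d => dist p.1 p.2) (K ×ˢ K) (x, y) :=
        continuous_dist.continuousWithinAt
      have c2 : ContinuousWithinAt (fun p : Euc d × Euc d =>
          dist (S.wmap w p.1) (S.wmap w p.2)) (K ×ˢ K) (x, y) := by
        have h1 : ContinuousOn (fun p : Euc d × Euc d => S.wmap w p.1) (K ×ˢ K) :=
          (hK.continuousOn w).comp continuousOn_fst fun p hp => hp.1
        have h2 : ContinuousOn (fun p : Euc d × Euc d => S.wmap w p.2) (K ×ˢ K) :=
          (hK.continuousOn w).comp continuousOn_snd fun p hp => hp.2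
        exact continuous_dist.continuousAt.comp_continuousWithinAt
          ((h1 _ ⟨hx, hy⟩).prodMk (h2 _ ⟨hx, hy⟩))
      set α := dist x y
      set β := dist (S.wmap w x) (S.wmap w y)
      refine ⟨1 + α / β + β / α, ?_, ?_⟩
      · have : 0 < α / β := by positivity
        have : 0 < β / α := by positivity
        linarith
      · have e1 : α < (1 + α / β + β / α) * β := by
          have h : (1 + α / β + β / α) * β = β + α + β / α * β := by field_simp
          have : 0 < β / α * β := by positivity
          linarith
        have e2 : β < (1 + α / β + β / α) * α := by
          have h : (1 + α / β + β / α) * α = α + α / β * α + β := by field_simp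
          have : 0 < α / β * α := by positivity
          linarith
        filter_upwards [c1.eventually_lt (c2.const_mul (1 + α / β + β / α)) e1,
          c2.eventually_lt (c1.const_mul (1 + α / β + β / α)) e2] with p h1 h2
          using ⟨h1.le, h2.le⟩

/-- Distortion constants multiply under composition. -/
lemma IsAttractor.distLE_append (hK : IsAttractor S K) {u v : List (Fin m)} {c₁ c₂ : ℝ}
    (hc₁ : 0 ≤ c₁) (h₁ : S.DistLE c₁ u (S.wmap v '' K)) (h₂ : S.DistLE c₂ v K) :
    S.DistLE (c₁ * c₂) (u ++ v) K := by
  intro x hx y hy x' hx' y' hy'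
  have H₁ := h₁ _ ⟨x, hx, rfl⟩ _ ⟨y, hy, rfl⟩ _ ⟨x', hx', rfl⟩ _ ⟨y', hy', rfl⟩
  have H₂ := h₂ x hx y hy x' hx' y' hy'
  simp only [wmap_append, Function.comp_apply]
  rcases eq_or_ne x' y' with rfl | hne
  · simp
  have hp : 0 < dist (S.wmap v x') (S.wmap v y') :=
    dist_pos.2 fun h => hne (hK.injOn v hx' hy' h)
  refine le_of_mul_le_mul_right ?_ hp
  set a := dist (S.wmap u (S.wmap v x)) (S.wmap u (S.wmap v y))
  set a' := dist (S.wmap u (S.wmap v x')) (S.wmap u (S.wmap v y'))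
  set b := dist (S.wmap v x) (S.wmap v y)
  set b' := dist (S.wmap v x') (S.wmap v y')
  have ha' : 0 ≤ a' := dist_nonneg
  calc a * dist x' y' * b' = (a * b') * dist x' y' := by ring
    _ ≤ (c₁ * (a' * b)) * dist x' y' := by gcongr
    _ = c₁ * a' * (b * dist x' y') := by ring
    _ ≤ c₁ * a' * (c₂ * (b' * dist x y)) := by gcongr
    _ = _ := by ring

lemma IsAttractor.distLE_letter (hd : 1 ≤ d) (hK : IsAttractor S K) :
    ∃ D : ℝ, 1 ≤ D ∧ ∀ i : Fin m, S.DistLE D [i] K := by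
  choose D hD h using fun i : Fin m => hK.bilip hd [i]
  obtain ⟨B, hB⟩ := (finite_range fun i => D i * D i).bddAbove
  refine ⟨max 1 B, le_max_left _ _, fun i x hx y hy x' hx' y' hy' => ?_⟩
  have h1 := (h i (x, y) ⟨hx, hy⟩).2
  have h2 := (h i (x', y') ⟨hx', hy'⟩).1
  simp only at h1 h2
  have hDi := zero_le_one.trans (hD i)
  calc _ ≤ (D i * dist x y) * (D i * dist (S.wmap [i] x') (S.wmap [i] y')) := by gcongr
    _ = D i * D i * (dist (S.wmap [i] x') (S.wmap [i] y') * dist x y) := by ring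
    _ ≤ _ := by
      gcongr
      exact (hB ⟨i, rfl⟩).trans (le_max_right _ _)

/-- Subexponential distortion: a word is cut into blocks of length `q`, all but boundedly many of
which act on a set small enough for the local distortion estimate. -/
lemma IsAttractor.distLE (hd : 1 ≤ d) (hm : 2 ≤ m) (hK : IsAttractor S K)
    (hwc : IsWeaklyConformal S K) {e : ℝ} (he : 0 < e) :
    ∃ C : ℝ, 0 < C ∧ ∀ u : List (Fin m), S.DistLE (C * Real.exp (2 * (u.length * e))) u K := by
  obtain ⟨q, hq1, hq3, hq⟩ := hK.exists_block hd hm hwc he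
  obtain ⟨δ, hδ, hloc⟩ := hK.local_dist hd hq3 hq
  obtain ⟨proj, hpK, hp, hlim⟩ := hwc
  obtain ⟨N, hN⟩ := hK.shrink hm hp hδ
  obtain ⟨D, hD, hlet⟩ := hK.distLE_letter hd
  have hpow : ∀ u : List (Fin m), S.DistLE (D ^ u.length) u K := by
    intro u
    induction u with
    | nil => intro x _ y _ x' _ y' _; simp [C1IFS.wmap, mul_comm]
    | cons i u ih =>
      have h1 : S.DistLE D [i] (S.wmap u '' K) := by
        have := hlet i
        intro x hx y hy x' hx' y' hy'
        have hs := (hK.mapsTo u).image_subset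
        exact this x (hs hx) y (hs hy) x' (hs hx') y' (hs hy')
      have := hK.distLE_append (zero_le_one.trans hD) h1 ih
      rwa [← pow_succ'] at this
  refine ⟨D ^ (N + q), by positivity, ?_⟩
  suffices h : ∀ k, ∀ u : List (Fin m), u.length = k →
      S.DistLE (D ^ (N + q) * Real.exp (2 * (k * e))) u K from fun u => h _ u rfl
  intro k
  induction k using Nat.strong_induction_on with
  | _ k ih =>
    intro u hu
    rcases lt_or_ge k (N + q) with hk | hk
    · intro x hx y hy x' hx' y' hy'
      refine (hpow u x hx y hy x' hx' y' hy').trans ?_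
      gcongr
      rw [hu]
      calc D ^ k ≤ D ^ (N + q) := pow_le_pow_right₀ hD hk.le
        _ ≤ D ^ (N + q) * Real.exp (2 * (k * e)) :=
          le_mul_of_one_le_right (by positivity) (Real.one_le_exp (by positivity))
    · have hv : (u.drop q).length = k - q := by simp [hu]
      have h2 := ih (k - q) (by omega) (u.drop q) hv
      have h1 : S.DistLE (Real.exp (2 * (q * e))) (u.take q) (S.wmap (u.drop q) '' K) := by
        obtain ⟨z, hz⟩ := hK.2.1
        have hsub : S.wmap (u.drop q) '' K ⊆ ball (S.wmap (u.drop q) z) δ := by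
          rintro _ ⟨y, hy, rfl⟩
          exact hN _ (by omega) y hy z hz
        intro x hx y hy x' hx' y' hy'
        exact hloc (u.take q) (by simp [hu]; omega) _ (hK.mapsTo _ hz) x (hsub hx) y (hsub hy)
          x' (hsub hx') y' (hsub hy')
      have h3 := hK.distLE_append (Real.exp_pos _).le h1 h2
      rw [List.take_append_drop] at h3
      convert h3 using 1
      rw [mul_left_comm (Real.exp _), ← Real.exp_add, Nat.cast_sub (by omega)]
      ring_nf

/-! ### Almost subadditivity -/

lemma IsAttractor.diam_append_le (hK : IsAttractor S K) {u : List (Fin m)} {c : ℝ} (hc : 0 ≤ c)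
    (h : S.DistLE c u K) {x₀ y₀ : Euc d} (hx₀ : x₀ ∈ K) (hy₀ : y₀ ∈ K) (hne : x₀ ≠ y₀)
    (v : List (Fin m)) :
    diam (S.wmap (u ++ v) '' K) ≤
      c / dist x₀ y₀ * (diam (S.wmap u '' K) * diam (S.wmap v '' K)) := by
  have hd0 : 0 < dist x₀ y₀ := dist_pos.2 hne
  have hb : ∀ w : List (Fin m), Bornology.IsBounded (S.wmap w '' K) := fun w =>
    hK.1.isBounded.subset (hK.mapsTo w).image_subset
  refine diam_le_of_forall_dist_le (by positivity) ?_
  rintro _ ⟨x, hx, rfl⟩ _ ⟨y, hy, rfl⟩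
  rw [wmap_append, div_mul_eq_mul_div, le_div_iff₀ hd0]
  refine (h _ (hK.mapsTo v hx) _ (hK.mapsTo v hy) x₀ hx₀ y₀ hy₀).trans ?_
  gcongr
  · exact dist_le_diam_of_mem (hb u) ⟨x₀, hx₀, rfl⟩ ⟨y₀, hy₀, rfl⟩
  · exact dist_le_diam_of_mem (hb v) ⟨x, hx, rfl⟩ ⟨y, hy, rfl⟩

end Attractor

/-- For a `C¹` weakly conformal IFS with attractor `K` and `s ≥ 0`, the sequence
`g_n = log Σ_{w ∈ Λ^n} |f_w(K)|^s` is almost subadditive: for every `ε > 0` there is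
`M_ε > 0` with `g_{n+k} ≤ M_ε + k ε + g_n + g_k` for all `n, k ≥ 1`. -/
theorem statement5 {d m : ℕ} (hd : 1 ≤ d) (hm : 2 ≤ m)
    (S : C1IFS d m) (K : Set (Euc d)) (hK : IsAttractor S K)
    (hwc : IsWeaklyConformal S K)
    (s : ℝ) (hs : 0 ≤ s) :
    ∀ ε : ℝ, 0 < ε → ∃ M : ℝ, 0 < M ∧
      ∀ n : ℕ, 1 ≤ n → ∀ k : ℕ, 1 ≤ k →
        Real.log (∑ w : Fin (n + k) → Fin m, diam (S.wmap (List.ofFn w) '' K) ^ s)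
          ≤ M + (k : ℝ) * ε
            + Real.log (∑ w : Fin n → Fin m, diam (S.wmap (List.ofFn w) '' K) ^ s)
            + Real.log (∑ w : Fin k → Fin m, diam (S.wmap (List.ofFn w) '' K) ^ s) := by
  intro ε hε
  rcases K.subsingleton_or_nontrivial with hsub | ⟨x₀, hx₀, y₀, hy₀, hne⟩
  · -- all diameters vanish; the sums are `0` (with `log 0 = 0`) or, if `s = 0`, powers of `m`
    have hdiam : ∀ w : List (Fin m), diam (S.wmap w '' K) = 0 := fun w =>
      diam_subsingleton (hsub.image _)
    refine ⟨1, one_pos, fun n _ k _ => ?_⟩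
    have hk : 0 ≤ (k : ℝ) * ε := by positivity
    rcases eq_or_ne s 0 with rfl | hs0
    · simp only [Real.rpow_zero, Finset.sum_const, Finset.card_univ, Fintype.card_fun,
        Fintype.card_fin, nsmul_eq_mul, mul_one, Nat.cast_pow, Real.log_pow, Nat.cast_add]
      linarith
    · simp only [hdiam, Real.zero_rpow hs0, Finset.sum_const_zero, Real.log_zero]
      linarith
  -- raising the distortion constant `exp (2 e k)` to the power `s` costs at most `exp (k ε)`
  obtain ⟨e, he, hes⟩ : ∃ e > 0, s * (2 * e) ≤ ε := by
    refine ⟨ε / (2 * (s + 1)), by positivity, ?_⟩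
    have : s * (2 * (ε / (2 * (s + 1)))) = ε * (s / (s + 1)) := by field_simp
    rw [this]
    exact mul_le_of_le_one_right hε.le ((div_le_one (by positivity)).2 (by linarith))
  obtain ⟨C, hC, hdist⟩ := hK.distLE hd hm hwc he
  have hd0 : 0 < dist x₀ y₀ := dist_pos.2 hne
  have hpos : ∀ w : List (Fin m), 0 < diam (S.wmap w '' K) := fun w =>
    (dist_pos.2 fun h => hne (hK.injOn w hx₀ hy₀ h)).trans_le
      (dist_le_diam_of_mem (hK.1.isBounded.subset (hK.mapsTo w).image_subset)
        ⟨x₀, hx₀, rfl⟩ ⟨y₀, hy₀, rfl⟩)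
  refine ⟨|s * Real.log (C / dist x₀ y₀)| + 1, by positivity, fun n _ k _ => ?_⟩
  have : Nonempty (Fin m) := ⟨⟨0, by omega⟩⟩
  have hsum : ∀ j : ℕ, 0 < ∑ w : Fin j → Fin m, diam (S.wmap (List.ofFn w) '' K) ^ s := fun j =>
    Finset.sum_pos (fun w _ => Real.rpow_pos_of_pos (hpos _) s) Finset.univ_nonempty
  have hkey : ∑ w : Fin (n + k) → Fin m, diam (S.wmap (List.ofFn w) '' K) ^ s ≤
      (C * Real.exp (2 * (k * e)) / dist x₀ y₀) ^ s *
        ((∑ w : Fin k → Fin m, diam (S.wmap (List.ofFn w) '' K) ^ s) *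
          ∑ w : Fin n → Fin m, diam (S.wmap (List.ofFn w) '' K) ^ s) := by
    -- the prefix of length `k` is the one whose distortion is used
    rw [add_comm n k, ← (Fin.appendEquiv k n).sum_comp, Fintype.sum_prod_type,
      Finset.sum_mul_sum, Finset.mul_sum]
    refine Finset.sum_le_sum fun u _ => ?_
    rw [Finset.mul_sum]
    refine Finset.sum_le_sum fun v _ => ?_
    have h := hK.diam_append_le (by positivity) (hdist (List.ofFn u)) hx₀ hy₀ hne (List.ofFn v)
    rw [List.length_ofFn] at h
    have h1 : List.ofFn (Fin.appendEquiv k n (u, v)) = List.ofFn u ++ List.ofFn v :=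
      List.ofFn_fin_append u v
    rw [h1]
    calc _ ≤ _ := Real.rpow_le_rpow diam_nonneg h hs
      _ = _ := by
        rw [Real.mul_rpow (by positivity) (by positivity), Real.mul_rpow diam_nonneg diam_nonneg]
  have hB : 0 < C * Real.exp (2 * (k * e)) / dist x₀ y₀ := by positivity
  have hlog := Real.log_le_log (hsum (n + k)) hkey
  rw [Real.log_mul (Real.rpow_pos_of_pos hB s).ne' (mul_pos (hsum k) (hsum n)).ne',
    Real.log_mul (hsum k).ne' (hsum n).ne', Real.log_rpow hB, mul_div_right_comm,
    Real.log_mul (by positivity) (by positivity), Real.log_exp] at hlog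
  have h1 := le_abs_self (s * Real.log (C / dist x₀ y₀))
  have h2 : (k : ℝ) * (s * (2 * e)) ≤ k * ε := by gcongr
  linarith
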